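/- Let R be a Noetherian ring and 𝔞 an ideal of R. If f : M → N is an R-module homomorphism between 𝔞-weakly cofinite modules M, N with dim Supp(M) ≤ 1 and dim Supp(N) ≤ 1, then ker f and coker f are 𝔞-weakly cofinite (with support of dimension at most 1). Hence the category of 𝔞-weakly cofinite modules of support dimension ≤ 1 is an Abelian subcategory of the category of R-modules. -/

import Mathlib

open CategoryTheory

universe u

variable (R : Type u) [CommRing R]

/-- The `i`-th Ext module `Ext^i_R(N, M)` of `R`-modules. -/
noncomputable def extModule (i : ℕ) (N M : ModuleCat.{u} R) : ModuleCat.{u} R :=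
  ((Ext R (ModuleCat.{u} R) i).obj (Opposite.op N)).obj M

/-- A module is weakly Laskerian if every quotient has finitely many associated primes. -/
def IsWeaklyLaskerian (M : Type u) [AddCommGroup M] [Module R M] : Prop :=
  ∀ N : Submodule R M, (associatedPrimes R (M ⧸ N)).Finite

/-- `M` is `𝔞`-cofinite: `Supp M ⊆ V(𝔞)` and all `Ext^i_R(R/𝔞, M)` are finitely generated. -/
def IsCofinite (𝔞 : Ideal R) (M : ModuleCat.{u} R) : Prop :=
  Module.support R M ⊆ PrimeSpectrum.zeroLocus (𝔞 : Set R) ∧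
    ∀ i : ℕ, Module.Finite R (extModule R i (ModuleCat.of R (R ⧸ 𝔞)) M)

/-- `M` is `𝔞`-weakly cofinite: `Supp M ⊆ V(𝔞)` and all `Ext^i_R(R/𝔞, M)` are weakly
Laskerian. -/
def IsWeaklyCofinite (𝔞 : Ideal R) (M : ModuleCat.{u} R) : Prop :=
  Module.support R M ⊆ PrimeSpectrum.zeroLocus (𝔞 : Set R) ∧
    ∀ i : ℕ, IsWeaklyLaskerian R (extModule R i (ModuleCat.of R (R ⧸ 𝔞)) M)

/-- The Krull dimension of the support of a module. -/
noncomputable def suppDim (M : Type u) [AddCommGroup M] [Module R M] : WithBot ℕ∞ :=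
  Order.krullDim (Module.support R M)

/-- The cohomological dimension `cd(𝔞, M) = sup {i | H^i_𝔞(M) ≠ 0}`, as an element of `ℕ∞`. -/
noncomputable def cohomologicalDim (𝔞 : Ideal R) (M : ModuleCat.{u} R) : ℕ∞ :=
  ⨆ i ∈ {i : ℕ | Nontrivial ((localCohomology 𝔞 i).obj M)}, (i : ℕ∞)

/-- `p` is an attached prime of `M`: `p` is prime and is the annihilator of a quotient
of `M`. -/
def IsAttachedPrime (M : Type u) [AddCommGroup M] [Module R M] (p : Ideal R) : Prop :=
  p.IsPrime ∧ ∃ N : Submodule R M, p = Module.annihilator R (M ⧸ N)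

/-!
By the long exact sequences, everything follows once `Ext^i_R(R/𝔞, ker f)` is known to be weakly
Laskerian for `i ≥ 2`. More generally, if `Supp M ⊆ V(𝔞)` has dimension at most one and
`Ext^i_R(R/𝔞, M)` is weakly Laskerian for `i = 0, 1`, then it is so for all `i`.

Call a prime small if `V(p)` is finite: a module with finitely many associated primes and only
small primes in its support has finite support, hence is weakly Laskerian. By the dimension
hypothesis the non-small primes of `Supp M` are minimal in it, hence associated to `(0 :_M 𝔞)` and
finite in number. At such a prime `p`, infinitely many linearly independent socle elements of
`M_p` would embed a direct sum of infinitely many distinct domains `R/q`, `p ⊆ q`, into a quotient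
of `(0 :_M p)`, which has only finitely many associated primes; so `M_p` is Artinian. The
secondary decomposition of `M_p` and prime avoidance give one `x ∈ 𝔞` and one `n` such that
`M / (x M + (0 :_M 𝔞 ^ n))` has only small primes in its support. This controls `M / x M`, while
`0 :_M x` is handled by Noetherian induction on the annihilator of the module; as `x` annihilates
`R/𝔞`, these two determine `Ext^i_R(R/𝔞, M)`.
-/

section Support

variable {R} {M : Type*} [AddCommGroup M] [Module R M]

theorem mk_mem_support_of_mem_associatedPrimes {p : Ideal R} (hp : p ∈ associatedPrimes R M) :
    (⟨p, hp.1⟩ : PrimeSpectrum R) ∈ Module.support R M := by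
  obtain ⟨-, x, hx⟩ := id hp
  exact Module.mem_support_iff'.2 ⟨x, fun r hr hrx =>
    hr (hx.ge (Ideal.le_radical (Submodule.mem_colon_singleton.2 hrx)))⟩

theorem exists_mem_associatedPrimes_le_of_mem_support [IsNoetherianRing R] {p : PrimeSpectrum R}
    (hp : p ∈ Module.support R M) : ∃ q ∈ associatedPrimes R M, q ≤ p.asIdeal := by
  obtain ⟨m, hm⟩ := Module.mem_support_iff_exists_annihilator.1 hp
  obtain ⟨q, hq, hqp⟩ := Ideal.exists_minimalPrimes_le hm
  exact ⟨q, associatedPrimes.subset_of_injective (R ∙ m).injective_subtype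
    (Module.associatedPrimes.minimalPrimes_annihilator_subset_associatedPrimes R _ hq), hqp⟩

end Support

section WeaklyLaskerian

variable {R} {L M N : Type u} [AddCommGroup L] [Module R L] [AddCommGroup M] [Module R M]
  [AddCommGroup N] [Module R N]

namespace IsWeaklyLaskerian

theorem finite_associatedPrimes (hM : IsWeaklyLaskerian R M) : (associatedPrimes R M).Finite := by
  rw [← LinearEquiv.AssociatedPrimes.eq (Submodule.quotEquivOfEqBot (⊥ : Submodule R M) rfl)]
  exact hM ⊥

theorem of_surjective (hM : IsWeaklyLaskerian R M) (f : M →ₗ[R] N) (hf : Function.Surjective f) :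
    IsWeaklyLaskerian R N := by
  intro K
  rw [← LinearEquiv.AssociatedPrimes.eq
    ((K.mkQ ∘ₗ f).quotKerEquivOfSurjective (K.mkQ_surjective.comp hf))]
  exact hM _

theorem of_injective (hN : IsWeaklyLaskerian R N) (f : M →ₗ[R] N) (hf : Function.Injective f) :
    IsWeaklyLaskerian R M := by
  intro K
  refine (hN (K.map f)).subset (associatedPrimes.subset_of_injective
    (f := K.mapQ (K.map f) f (Submodule.le_comap_map f K)) ?_)
  rw [← LinearMap.ker_eq_bot, Submodule.mapQ, Submodule.ker_liftQ_eq_bot]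
  rw [LinearMap.ker_comp, Submodule.ker_mkQ, Submodule.comap_map_eq_of_injective hf]

theorem of_linearEquiv (hM : IsWeaklyLaskerian R M) (e : M ≃ₗ[R] N) : IsWeaklyLaskerian R N :=
  hM.of_surjective e.toLinearMap e.surjective

theorem of_exact (hL : IsWeaklyLaskerian R L) (hN : IsWeaklyLaskerian R N) {f : L →ₗ[R] M}
    {g : M →ₗ[R] N} (hfg : Function.Exact f g) : IsWeaklyLaskerian R M := by
  intro K
  have hrange : IsWeaklyLaskerian R (M ⧸ LinearMap.range f) :=
    hN.of_injective _ (LinearMap.injective_range_liftQ_of_exact hfg)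
  have hsup : (associatedPrimes R (M ⧸ LinearMap.range f ⊔ K)).Finite := by
    rw [← LinearEquiv.AssociatedPrimes.eq (Submodule.quotientQuotientEquivQuotientSup _ _)]
    exact hrange _
  refine ((hL (K.comap f)).union hsup).subset (associatedPrimes.subset_union_of_exact
    (f := (K.comap f).mapQ K f le_rfl) (g := Submodule.factor le_sup_right) ?_ ?_)
  · exact LinearMap.ker_eq_bot.1 (Submodule.ker_liftQ_eq_bot _ _ _
      (by rw [LinearMap.ker_comp, Submodule.ker_mkQ]))
  · rw [LinearMap.exact_iff, Submodule.factor, Submodule.ker_mapQ, Submodule.comap_id,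
      Submodule.range_mapQ, Submodule.map_sup, Submodule.mkQ_map_self, sup_bot_eq]

theorem of_ker_le_range (hL : IsWeaklyLaskerian R L) (hN : IsWeaklyLaskerian R N) {f : L →ₗ[R] M}
    {g : M →ₗ[R] N} (hfg : LinearMap.ker g ≤ LinearMap.range f) : IsWeaklyLaskerian R M :=
  ((hL.of_surjective f.rangeRestrict f.surjective_rangeRestrict).of_injective
    (Submodule.inclusion hfg) (Submodule.inclusion_injective hfg)).of_exact hN
    g.exact_subtype_ker_map

theorem of_subsingleton [Subsingleton M] : IsWeaklyLaskerian R M := by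
  intro K
  rw [associatedPrimes.eq_empty_of_subsingleton]
  exact Set.finite_empty

theorem prod (hM : IsWeaklyLaskerian R M) (hN : IsWeaklyLaskerian R N) :
    IsWeaklyLaskerian R (M × N) :=
  hM.of_exact hN Function.Exact.inl_snd

theorem pi {ι : Type} [Finite ι] (hM : IsWeaklyLaskerian R M) : IsWeaklyLaskerian R (ι → M) := by
  induction ι using Finite.induction_empty_option with
  | of_equiv e ih => exact ih.of_linearEquiv (LinearEquiv.funCongrLeft R M e.symm)
  | h_empty => exact of_subsingleton
  | h_option ih =>
    exact (hM.prod ih).of_linearEquiv (LinearEquiv.piOptionEquivProd (M := fun _ => M) R).symm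

theorem of_finite_support (hM : (Module.support R M).Finite) : IsWeaklyLaskerian R M := by
  intro K
  refine (hM.image PrimeSpectrum.asIdeal).subset fun p hp => ?_
  exact ⟨⟨p, hp.1⟩, Module.support_subset_of_surjective K.mkQ K.mkQ_surjective
    (mk_mem_support_of_mem_associatedPrimes hp), rfl⟩

theorem finite_of_dfinsupp_quotient [IsNoetherianRing R] {ι : Type} {P : ι → Ideal R}
    (hP : ∀ i, (P i).IsPrime) (hinj : Function.Injective P)
    (h : IsWeaklyLaskerian R (Π₀ i, R ⧸ P i)) : Finite ι := by
  classical
  refine Set.finite_univ_iff.1 (Set.Finite.of_finite_image (f := P)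
    (h.finite_associatedPrimes.subset ?_) hinj.injOn)
  rintro _ ⟨i, -, rfl⟩
  refine associatedPrimes.subset_of_injective (f := DFinsupp.lsingle i)
    DFinsupp.single_injective ?_
  rw [associatedPrimes.eq_singleton_of_isPrimary (hP i).isPrimary, (hP i).radical]
  exact Set.mem_singleton _

theorem exists_linearCombination_eq_zero [IsNoetherianRing R] (hM : IsWeaklyLaskerian R M)
    {p : Ideal R} (hp : (PrimeSpectrum.zeroLocus (p : Set R)).Infinite) (w : ℕ → M) :
    ∃ c : ℕ →₀ R, Finsupp.linearCombination R w c = 0 ∧ ∃ i, c i ∉ p := by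
  classical
  by_contra! hindep
  let P : ℕ ↪ PrimeSpectrum.zeroLocus (p : Set R) := hp.natEmbedding
  let φ : (ℕ →₀ R) →ₗ[R] Π₀ i, R ⧸ (P i).1.asIdeal :=
    DFinsupp.mapRange.linearMap (fun i => (P i).1.asIdeal.mkQ) ∘ₗ
      (finsuppLequivDFinsupp (M := R) R).toLinearMap
  have hφ : Function.Surjective φ :=
    ((DFinsupp.mapRange_surjective _ fun _ => map_zero _).2
      fun _ => Submodule.mkQ_surjective _).comp
      (finsuppLequivDFinsupp (M := R) R).surjective
  have hker : LinearMap.ker (Finsupp.linearCombination R w) ≤ LinearMap.ker φ := by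
    intro c hc
    ext i
    exact (Submodule.Quotient.mk_eq_zero _).2 ((P i).2 (hindep c hc i))
  have hquot : IsWeaklyLaskerian R ((ℕ →₀ R) ⧸ LinearMap.ker (Finsupp.linearCombination R w)) :=
    (hM.of_injective _ (Submodule.injective_subtype _)).of_linearEquiv
      (Finsupp.linearCombination R w).quotKerEquivRange.symm
  have := finite_of_dfinsupp_quotient (fun i => (P i).1.2)
    (fun i j hij => P.injective (Subtype.ext (PrimeSpectrum.ext hij)))
    (hquot.of_surjective (Submodule.liftQ _ φ hker) (LinearMap.range_eq_top.1
      ((Submodule.range_liftQ _ φ hker).trans (LinearMap.range_eq_top.2 hφ))))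
  exact not_finite ℕ

end IsWeaklyLaskerian

end WeaklyLaskerian

section ExtComparison

open CochainComplex HomComplex

variable {R} {X : ModuleCat.{u} R} (P : ProjectiveResolution X) (Y : ModuleCat.{u} R)

/-- The map sending an `i`-cocycle of the complex `Hom_R(P, Y)`, where `P` is a projective
resolution of `X`, to its class in the derived-category group `Abelian.Ext X Y i`. It is used to
identify the latter with the cohomology of `Hom_R(P, Y)`. -/
noncomputable def cocycleToExt (i : ℕ) :
    LinearMap.ker (Linear.leftComp R Y (P.complex.d (i + 1) i)) →ₗ[R] Abelian.Ext X Y i where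
  toFun f := P.extMk f.1 (i + 1) rfl f.2
  map_add' f g := (P.add_extMk f.1 g.1 (i + 1) rfl _ _).symm
  map_smul' r f := by
    refine Eq.symm ((Abelian.Ext.smul_eq_comp_mk₀ _ r).trans
      ((P.extMk_comp_mk₀ f.1 _ rfl f.2 _).trans ?_))
    congr 1

variable {Y}

theorem eq_zero_of_extMk_zero_eq_zero {f : P.complex.X 0 ⟶ Y} {m : ℕ} (hm : 0 + 1 = m)
    (hf : P.complex.d m 0 ≫ f = 0) (h : P.extMk f m hm hf = 0) : f = 0 := by
  rw [← P.extEquivCohomologyClass.apply_eq_iff_eq,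
    ProjectiveResolution.extEquivCohomologyClass_extMk,
    ProjectiveResolution.extEquivCohomologyClass_zero, CohomologyClass.mk_eq_zero_iff,
    Cocycle.toSingleMk_mem_coboundaries_iff _ _ _ _ _ 1 (by lia)] at h
  obtain ⟨g, hg⟩ := h
  have hd : P.cochainComplex.d (-(0 : ℕ)) 1 = 0 :=
    (P.cochainComplex.isZero_of_isStrictlyLE 0 1 (by lia)).eq_of_tgt _ _
  rw [hd, Limits.zero_comp] at hg
  rw [← cancel_epi (P.cochainComplexXIso (-(0 : ℕ)) 0 rfl).hom, ← hg, Limits.comp_zero]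

variable (Y)

theorem cocycleToExt_surjective (i : ℕ) : Function.Surjective (cocycleToExt P Y i) := by
  intro α
  obtain ⟨f, hf, rfl⟩ := P.extMk_surjective α (i + 1) rfl
  exact ⟨⟨f, hf⟩, rfl⟩

theorem ker_cocycleToExt {i j : ℕ} (hj : (ComplexShape.up ℕ).prev i = j) :
    LinearMap.ker (cocycleToExt P Y i) =
      (LinearMap.range (Linear.leftComp R Y (P.complex.d i j))).comap (Submodule.subtype _) := by
  ext f
  rcases i with _ | i
  · constructor
    · intro h
      exact ⟨0, (map_zero _).trans (eq_zero_of_extMk_zero_eq_zero P rfl f.2 h).symm⟩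
    · rintro ⟨g, hg⟩
      have hf : f = 0 := Subtype.ext (hg.symm.trans (by simp))
      rw [hf]
      exact zero_mem _
  · obtain rfl : i = j := by simpa using hj
    exact P.extMk_eq_zero_iff f.1 _ rfl f.2 i rfl

/-- The identification of the cohomological `Ext` underlying `extModule` with the derived-category
`Abelian.Ext`, for which Mathlib provides the covariant long exact sequences. -/
noncomputable def extModuleEquivExt (i : ℕ) (X Y : ModuleCat.{u} R) :
    extModule R i X Y ≃ₗ[R] Abelian.Ext X Y i :=
  let P := projectiveResolution X
  let K := P.complex.linearYonedaObj R Y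
  let S := K.sc' ((ComplexShape.up ℕ).prev i) i (i + 1)
  let φ : LinearMap.ker S.g.hom →ₗ[R] Abelian.Ext X Y i := cocycleToExt P Y i
  have hφ : LinearMap.range S.moduleCatToCycles = LinearMap.ker φ :=
    Submodule.ext fun f => (exists_congr fun g => Subtype.ext_iff).trans
      (Submodule.ext_iff.1 (ker_cocycleToExt P Y rfl) f).symm
  (P.isoExt i Y ≪≫ K.homologyIsoSc' _ i (i + 1) rfl (by simp) ≪≫
      S.moduleCatHomologyIso).toLinearEquiv ≪≫ₗ
    Submodule.quotEquivOfEq _ _ hφ ≪≫ₗ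
    φ.quotKerEquivOfSurjective (cocycleToExt_surjective P Y i)

theorem isWeaklyLaskerian_extModule_iff {i : ℕ} {X Y : ModuleCat.{u} R} :
    IsWeaklyLaskerian R (extModule R i X Y) ↔ IsWeaklyLaskerian R (Abelian.Ext X Y i) :=
  ⟨fun h => h.of_linearEquiv (extModuleEquivExt i X Y),
    fun h => h.of_linearEquiv (extModuleEquivExt i X Y).symm⟩

end ExtComparison

section ExtSequences

open Abelian

variable {R} {F : ModuleCat.{u} R} {S : ShortComplex (ModuleCat.{u} R)}

theorem isWeaklyLaskerian_ext_X₂ (hS : S.ShortExact) {i : ℕ}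
    (h₁ : IsWeaklyLaskerian R (Ext F S.X₁ i)) (h₃ : IsWeaklyLaskerian R (Ext F S.X₃ i)) :
    IsWeaklyLaskerian R (Ext F S.X₂ i) :=
  h₁.of_ker_le_range h₃ (f := (Ext.mk₀ S.f).postcompOfLinear R F (add_zero i))
    (g := (Ext.mk₀ S.g).postcompOfLinear R F (add_zero i))
    fun α hα => Ext.covariant_sequence_exact₂ F hS α hα

theorem isWeaklyLaskerian_ext_X₃ (hS : S.ShortExact) {i : ℕ}
    (h₂ : IsWeaklyLaskerian R (Ext F S.X₂ i)) (h₁ : IsWeaklyLaskerian R (Ext F S.X₁ (i + 1))) :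
    IsWeaklyLaskerian R (Ext F S.X₃ i) :=
  h₂.of_ker_le_range h₁ (f := (Ext.mk₀ S.g).postcompOfLinear R F (add_zero i))
    (g := hS.extClass.postcompOfLinear R F rfl)
    fun α hα => Ext.covariant_sequence_exact₃ F hS α rfl hα

theorem isWeaklyLaskerian_ext_X₁_succ (hS : S.ShortExact) {i : ℕ}
    (h₃ : IsWeaklyLaskerian R (Ext F S.X₃ i)) (h₂ : IsWeaklyLaskerian R (Ext F S.X₂ (i + 1))) :
    IsWeaklyLaskerian R (Ext F S.X₁ (i + 1)) :=
  h₃.of_ker_le_range h₂ (f := hS.extClass.postcompOfLinear R F rfl)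
    (g := (Ext.mk₀ S.f).postcompOfLinear R F (add_zero (i + 1)))
    fun α hα => Ext.covariant_sequence_exact₁ F hS α hα rfl

theorem isWeaklyLaskerian_ext_zero_X₁ (hS : S.ShortExact)
    (h₂ : IsWeaklyLaskerian R (Ext F S.X₂ 0)) : IsWeaklyLaskerian R (Ext F S.X₁ 0) :=
  have := hS.mono_f
  h₂.of_injective ((Ext.mk₀ S.f).postcompOfLinear R F (add_zero 0))
    (Ext.postcomp_mk₀_injective_of_mono F S.f)

theorem isWeaklyLaskerian_ker_postcomp (hS : S.ShortExact)
    (h₃ : ∀ i, IsWeaklyLaskerian R (Ext F S.X₃ i)) (i : ℕ) :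
    IsWeaklyLaskerian R
      (LinearMap.ker ((Ext.mk₀ S.f).postcompOfLinear R F (add_zero i))) := by
  rcases i with _ | i
  · have := hS.mono_f
    have hker : LinearMap.ker ((Ext.mk₀ S.f).postcompOfLinear R F (add_zero 0)) = ⊥ :=
      LinearMap.ker_eq_bot.2 (Ext.postcomp_mk₀_injective_of_mono F S.f)
    rw [hker]
    exact IsWeaklyLaskerian.of_subsingleton
  · have hle : LinearMap.ker ((Ext.mk₀ S.f).postcompOfLinear R F (add_zero (i + 1))) ≤
        LinearMap.range (hS.extClass.postcompOfLinear R F rfl) :=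
      fun α hα => Ext.covariant_sequence_exact₁ F hS α hα rfl
    exact ((h₃ i).of_surjective _ (LinearMap.surjective_rangeRestrict _)).of_injective
      (Submodule.inclusion hle) (Submodule.inclusion_injective hle)

theorem smul_ext_eq_zero {Y : ModuleCat.{u} R} {i : ℕ} {x : R} (hx : ∀ y : F, x • y = 0)
    (α : Ext F Y i) : x • α = 0 := by
  have hF : x • 𝟙 F = 0 := ModuleCat.hom_ext (LinearMap.ext hx)
  rw [← Ext.mk₀_id_comp α, ← Ext.smul_comp, ← Ext.mk₀_smul, hF, Ext.mk₀_zero, Ext.zero_comp]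

variable {M : Type u} [AddCommGroup M] [Module R M]

theorem shortExact_subtype_mkQ (K : Submodule R M) :
    (ModuleCat.shortComplexOfCompEqZero K.subtype K.mkQ
      (LinearMap.exact_subtype_mkQ K).linearMap_comp_eq_zero).ShortExact :=
  ModuleCat.shortComplex_shortExact _ (LinearMap.exact_subtype_mkQ K) K.injective_subtype
    K.mkQ_surjective

theorem exact_subtype_ker_rangeRestrict {N : Type u} [AddCommGroup N] [Module R N]
    (f : M →ₗ[R] N) : Function.Exact (LinearMap.ker f).subtype f.rangeRestrict :=
  LinearMap.exact_iff.2 (by rw [LinearMap.ker_rangeRestrict, Submodule.range_subtype])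

theorem shortExact_subtype_rangeRestrict {N : Type u} [AddCommGroup N] [Module R N]
    (f : M →ₗ[R] N) :
    (ModuleCat.shortComplexOfCompEqZero (LinearMap.ker f).subtype f.rangeRestrict
      (exact_subtype_ker_rangeRestrict f).linearMap_comp_eq_zero).ShortExact :=
  ModuleCat.shortComplex_shortExact _ (exact_subtype_ker_rangeRestrict f)
    (LinearMap.ker f).injective_subtype f.surjective_rangeRestrict

theorem isWeaklyLaskerian_ext_of_ker_lsmul_of_quotient {x : R} (hx : ∀ y : F, x • y = 0)
    (hker : ∀ i, IsWeaklyLaskerian R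
      (Ext F (ModuleCat.of R (LinearMap.ker (LinearMap.lsmul R M x))) i))
    (hquot : ∀ i, IsWeaklyLaskerian R
      (Ext F (ModuleCat.of R (M ⧸ LinearMap.range (LinearMap.lsmul R M x))) i)) (i : ℕ) :
    IsWeaklyLaskerian R (Ext F (ModuleCat.of R M) i) := by
  let μ := LinearMap.lsmul R M x
  let φ := (Ext.mk₀ (ModuleCat.ofHom μ.rangeRestrict)).postcompOfLinear R F (add_zero i)
  let ψ := (Ext.mk₀ (ModuleCat.ofHom (LinearMap.range μ).subtype)).postcompOfLinear R F
    (add_zero i)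
  have hψφ (α : Ext F (ModuleCat.of R M) i) : φ α ∈ LinearMap.ker ψ := by
    have hcomp : ModuleCat.ofHom μ.rangeRestrict ≫ ModuleCat.ofHom (LinearMap.range μ).subtype =
        x • 𝟙 (ModuleCat.of R M) := rfl
    calc ψ (φ α) = α.comp (Ext.mk₀ (x • 𝟙 (ModuleCat.of R M))) (add_zero i) := by
          rw [← hcomp, ← Ext.mk₀_comp_mk₀, ← Ext.comp_assoc_of_third_deg_zero]
          rfl
      _ = x • α := (Ext.smul_eq_comp_mk₀ α x).symm
      _ = 0 := smul_ext_eq_zero hx α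
  refine (hker i).of_ker_le_range
    (isWeaklyLaskerian_ker_postcomp (shortExact_subtype_mkQ (LinearMap.range μ)) hquot i)
    (f := (Ext.mk₀ (ModuleCat.ofHom (LinearMap.ker μ).subtype)).postcompOfLinear R F (add_zero i))
    (g := φ.codRestrict (LinearMap.ker ψ) hψφ) ?_
  rw [LinearMap.ker_codRestrict]
  exact fun α hα => Ext.covariant_sequence_exact₂ F (shortExact_subtype_rangeRestrict μ) α hα

theorem isWeaklyLaskerian_ext_of_finite [IsNoetherianRing R] (F : ModuleCat.{u} R)
    [Module.Finite R F] (hM : IsWeaklyLaskerian R M) (i : ℕ) :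
    IsWeaklyLaskerian R (Ext F (ModuleCat.of R M) i) := by
  induction i generalizing F with
  | zero =>
    obtain ⟨n, f, hf⟩ := Module.Finite.exists_fin' R F
    have hhom : IsWeaklyLaskerian R (F →ₗ[R] M) :=
      ((hM.pi (ι := Fin n)).of_linearEquiv ((Pi.basisFun R (Fin n)).constr R)).of_injective
        (LinearMap.lcomp R M f) fun _ _ h => LinearMap.cancel_right hf |>.1 h
    exact hhom.of_linearEquiv (Ext.linearEquiv₀.trans (ModuleCat.homLinearEquiv (S := R))).symm
  | succ n ih =>
    obtain ⟨P, _, _, _, _, f, hf⟩ := Module.exists_finite_presentation R F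
    have hS := LinearMap.shortExact_shortComplexKer hf
    exact (ih _).of_surjective
      (hS.extClass.precompOfLinear R (ModuleCat.of R M) (add_comm 1 n))
      (precomp_extClass_surjective_of_projective_X₂ _ hS n)

variable (M) in
/-- The identification of `Hom_R(R/𝔞, M)` with the submodule `(0 :_M 𝔞)` of `M`, used to compute
`Ext^0_R(R/𝔞, M)`. -/
def homQuotientEquivTorsionBySet (𝔞 : Ideal R) :
    ((R ⧸ 𝔞) →ₗ[R] M) ≃ₗ[R] Submodule.torsionBySet R M (𝔞 : Set R) where
  toFun f := ⟨f (𝔞.mkQ 1), (Submodule.mem_torsionBySet_iff _ _).2 fun a => by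
    rw [← map_smul, ← map_smul, smul_eq_mul, mul_one, Submodule.mkQ_apply,
      (Submodule.Quotient.mk_eq_zero 𝔞).2 a.2, map_zero]⟩
  map_add' _ _ := rfl
  map_smul' _ _ := rfl
  invFun m := 𝔞.liftQ (LinearMap.toSpanSingleton R M m.1) fun a ha =>
    (Submodule.mem_torsionBySet_iff _ _).1 m.2 ⟨a, ha⟩
  left_inv f := Submodule.linearMap_qext _ (LinearMap.ext_ring (one_smul R _))
  right_inv m := Subtype.ext (one_smul R m.1)

theorem isWeaklyLaskerian_ext_zero_iff {𝔞 : Ideal R} :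
    IsWeaklyLaskerian R (Ext (ModuleCat.of R (R ⧸ 𝔞)) (ModuleCat.of R M) 0) ↔
      IsWeaklyLaskerian R (Submodule.torsionBySet R M (𝔞 : Set R)) :=
  let e := Ext.linearEquiv₀ (R := R) (X := ModuleCat.of R (R ⧸ 𝔞)) (Y := ModuleCat.of R M) ≪≫ₗ
    ModuleCat.homLinearEquiv (S := R) ≪≫ₗ homQuotientEquivTorsionBySet M 𝔞
  ⟨fun h => h.of_linearEquiv e, fun h => h.of_linearEquiv e.symm⟩

end ExtSequences

section Artinian

theorem exists_forall_ge_eq_of_antitone {α : Type*} [PartialOrder α] [WellFoundedLT α]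
    {W : ℕ → ℕ → α} (hW₁ : ∀ k, Antitone fun i => W i k) (hW₂ : ∀ i, Antitone (W i)) :
    ∃ n, ∀ m ≥ n, ∀ i, W i m = W i n := by
  obtain ⟨k, hk⟩ := WellFoundedLT.antitone_chain_condition (f := fun k => W k k)
    fun a b hab => (hW₁ b hab).trans (hW₂ a hab)
  choose n hn using fun i => WellFoundedLT.antitone_chain_condition (hW₂ i)
  refine ⟨max k ((Finset.range k).sup n), fun m hm i => ?_⟩
  rcases lt_or_ge i k with hik | hki
  · have hi : n i ≤ max k ((Finset.range k).sup n) :=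
      (Finset.le_sup (Finset.mem_range.2 hik)).trans (le_max_right _ _)
    exact (hn i m (hi.trans hm)).symm.trans (hn i _ hi)
  · refine (hW₂ i hm).antisymm ?_
    calc W i (max k ((Finset.range k).sup n)) ≤ W k k :=
          (hW₁ _ hki).trans (hW₂ k (le_max_left _ _))
      _ = W (max i m) (max i m) := hk _ (hki.trans (le_max_left i m))
      _ ≤ W i m := (hW₁ _ (le_max_left i m)).trans (hW₂ i (le_max_right i m))

variable {A M : Type*} [CommRing A] [AddCommGroup M] [Module A M]

/-- The submodule `x ^ i N ∩ (0 :_M x)` of the `x`-torsion of `M`. When `M` is `x`-power torsion,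
these submodules for varying `i` detect strict inclusions between the submodules `N` of `M`. -/
def powSmulTorsionBy (x : A) (i : ℕ) (N : Submodule A M) :
    Submodule A (Submodule.torsionBy A M x) :=
  (N.map (LinearMap.lsmul A M (x ^ i))).comap (Submodule.torsionBy A M x).subtype

theorem powSmulTorsionBy_antitone (x : A) (N : Submodule A M) :
    Antitone fun i => powSmulTorsionBy x i N := by
  refine antitone_nat_of_succ_le fun i => Submodule.comap_mono ?_
  rintro _ ⟨y, hy, rfl⟩
  exact ⟨x • y, N.smul_mem x hy, by simp only [LinearMap.lsmul_apply, smul_smul, pow_succ]⟩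

theorem powSmulTorsionBy_mono (x : A) (i : ℕ) :
    Monotone (powSmulTorsionBy (M := M) x i) :=
  fun _ _ h => Submodule.comap_mono (Submodule.map_mono h)

theorem le_of_powSmulTorsionBy_le {x : A} (hx : ∀ m : M, ∃ n : ℕ, x ^ n • m = 0)
    {N N' : Submodule A M} (hN : N ≤ N')
    (h : ∀ i, powSmulTorsionBy x i N' ≤ powSmulTorsionBy x i N) : N' ≤ N := by
  have hpow (i : ℕ) : ∀ y ∈ N', x ^ i • y = 0 → y ∈ N := by
    induction i with
    | zero =>
      intro y _ hy
      rw [pow_zero, one_smul] at hy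
      exact hy ▸ N.zero_mem
    | succ i ih =>
      intro y hy hxy
      have hmem : x ^ i • y ∈ Submodule.torsionBy A M x := by
        rwa [Submodule.mem_torsionBy_iff, smul_smul, ← pow_succ']
      obtain ⟨z, hz, hzy⟩ :=
        h i (x := ⟨x ^ i • y, hmem⟩) (Submodule.mem_comap.2 ⟨y, hy, rfl⟩)
      have hsub : y - z ∈ N := ih _ (N'.sub_mem hy (hN hz))
        ((smul_sub _ _ _).trans (sub_eq_zero.2 hzy.symm))
      exact (N.sub_mem_iff_left hz).1 hsub
  exact fun y hy => (hx y).elim fun i hi => hpow i y hy hi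

theorem isArtinian_of_isArtinian_torsionBy {x : A} (hx : ∀ m : M, ∃ n : ℕ, x ^ n • m = 0)
    (h : IsArtinian A (Submodule.torsionBy A M x)) : IsArtinian A M := by
  refine monotone_stabilizes_iff_artinian.1 fun N => ?_
  obtain ⟨n, hn⟩ := exists_forall_ge_eq_of_antitone
    (W := fun i k => powSmulTorsionBy x i (OrderDual.ofDual (N k)))
    (fun k => powSmulTorsionBy_antitone x _)
    (fun i _ _ hab => powSmulTorsionBy_mono x i (N.monotone hab))
  exact ⟨n, fun m hm => le_antisymm (N.monotone hm)
    (le_of_powSmulTorsionBy_le hx (N.monotone hm) fun i => (hn m hm i).ge)⟩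

theorem isArtinian_of_isArtinian_torsionBySet (s : Finset A) {M : Type*} [AddCommGroup M]
    [Module A M] (hs : ∀ x ∈ s, ∀ m : M, ∃ n : ℕ, x ^ n • m = 0)
    (h : IsArtinian A (Submodule.torsionBySet A M (s : Set A))) : IsArtinian A M := by
  classical
  induction s using Finset.induction_on generalizing M with
  | empty =>
    have htop : Submodule.torsionBySet A M ((∅ : Finset A) : Set A) = ⊤ :=
      eq_top_iff.2 fun m _ => (Submodule.mem_torsionBySet_iff _ _).2 fun a => by simpa using a.2
    rw [htop] at h
    exact isArtinian_of_linearEquiv Submodule.topEquiv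
  | insert x s _ ih =>
    have hxM : ∀ m : M, ∃ n : ℕ, x ^ n • m = 0 := hs x (Finset.mem_insert_self x s)
    refine ih (fun y hy => hs y (Finset.mem_insert_of_mem hy)) ?_
    refine isArtinian_of_isArtinian_torsionBy (x := x)
      (fun m => (hxM m).imp fun n hn => Subtype.ext hn) ?_
    let T := Submodule.torsionBySet A M (s : Set A)
    have hle : (Submodule.torsionBy A T x).map T.subtype ≤
        Submodule.torsionBySet A M ((insert x s : Finset A) : Set A) := by
      rintro _ ⟨m, hm, rfl⟩
      refine (Submodule.mem_torsionBySet_iff _ _).2 ?_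
      rintro ⟨a, ha⟩
      rcases Finset.mem_insert.1 ha with rfl | ha
      · exact congrArg T.subtype ((Submodule.mem_torsionBy_iff _ _).1 hm)
      · exact (Submodule.mem_torsionBySet_iff _ _).1 m.2 ⟨a, ha⟩
    have := isArtinian_of_le hle
    exact isArtinian_of_linearEquiv
      (Submodule.equivMapOfInjective T.subtype T.injective_subtype _).symm

end Artinian

section Secondary

variable {A M : Type*} [CommRing A] [AddCommGroup M] [Module A M]

variable (A M) in
/-- A nonzero module is secondary if every ring element acts on it either nilpotently or
surjectively. Secondary modules are the building blocks of Artinian modules. -/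
def IsSecondary : Prop :=
  Nontrivial M ∧ ∀ r : A, r ∈ (Module.annihilator A M).radical ∨
    Function.Surjective (LinearMap.lsmul A M r)

theorem IsSecondary.isPrime_radical_annihilator (hM : IsSecondary A M) :
    (Module.annihilator A M).radical.IsPrime := by
  obtain ⟨_, hM⟩ := hM
  refine ⟨fun h => ?_, fun {a b} hab => or_iff_not_imp_left.2 fun ha => ?_⟩
  · exact not_subsingleton M (Module.annihilator_eq_top_iff.1 (Ideal.radical_eq_top.1 h))
  · obtain ⟨n, hn⟩ := hab
    have hsurj : Function.Surjective (LinearMap.lsmul A M a ^ n) := by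
      rw [Module.End.coe_pow]
      exact ((hM a).resolve_left ha).iterate n
    refine ⟨n, Module.mem_annihilator.2 fun m => ?_⟩
    obtain ⟨m, rfl⟩ := hsurj m
    have hpow : (LinearMap.lsmul A M a ^ n) m = a ^ n • m :=
      LinearMap.congr_fun (map_pow (Module.toModuleEnd A M) a n).symm m
    rw [hpow, smul_smul, ← mul_pow, mul_comm b a]
    exact Module.mem_annihilator.1 hn m

theorem isSecondary_of_supIrred [IsArtinian A M] {S : Submodule A M} (hS : SupIrred S) :
    IsSecondary A S := by
  refine ⟨(Submodule.nontrivial_iff_ne_bot).2 fun h => hS.1 (isMin_iff_eq_bot.2 h), fun r => ?_⟩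
  let φ : Module.End A S := LinearMap.lsmul A S r
  obtain ⟨n, hn, hcodisjoint⟩ := ((Filter.eventually_ge_atTop 1).and
    (LinearMap.eventually_codisjoint_ker_pow_range_pow φ)).exists
  have hsup : (LinearMap.ker (φ ^ n)).map S.subtype ⊔ (LinearMap.range (φ ^ n)).map S.subtype =
      S := by
    rw [← Submodule.map_sup, hcodisjoint.eq_top, Submodule.map_subtype_top]
  have eq_top {K : Submodule A S} (hK : K.map S.subtype = S) : K = ⊤ :=
    Submodule.map_injective_of_injective S.injective_subtype
      (hK.trans (Submodule.map_subtype_top S).symm)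
  refine (hS.2 hsup).imp (fun hker => ⟨n, Module.mem_annihilator.2 fun y => ?_⟩) fun hrange => ?_
  · have hpow : φ ^ n = LinearMap.lsmul A S (r ^ n) := (map_pow (Module.toModuleEnd A S) r n).symm
    have hy : y ∈ LinearMap.ker (φ ^ n) := eq_top hker ▸ Submodule.mem_top
    rwa [hpow] at hy
  · have hsurj : Function.Surjective (φ ^ n) := LinearMap.range_eq_top.1 (eq_top hrange)
    rw [Module.End.coe_pow, ← Nat.succ_pred_eq_of_pos hn, Function.iterate_succ'] at hsurj
    exact hsurj.of_comp

theorem exists_primes_forall_range_lsmul_sup_torsionBySet_eq_top [IsArtinian A M] {𝔟 : Ideal A}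
    (h𝔟 : 𝔟.FG) : ∃ (Q : Finset (Ideal A)) (n : ℕ), (∀ q ∈ Q, q.IsPrime ∧ ¬ 𝔟 ≤ q) ∧
      ∀ x : A, (∀ q ∈ Q, x ∉ q) → LinearMap.range (LinearMap.lsmul A M x) ⊔
        Submodule.torsionBySet A M ((𝔟 ^ n : Ideal A) : Set A) = ⊤ := by
  classical
  obtain ⟨s, hs, hirr⟩ := exists_supIrred_decomposition (⊤ : Submodule A M)
  have hpow (S : Submodule A M) : ∃ n : ℕ, 𝔟 ≤ (Module.annihilator A S).radical →
      𝔟 ^ n ≤ Module.annihilator A S := by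
    by_cases h : 𝔟 ≤ (Module.annihilator A S).radical
    · exact (Ideal.exists_pow_le_of_le_radical_of_fg h h𝔟).imp fun n hn _ => hn
    · exact ⟨0, fun h' => absurd h' h⟩
  choose n hn using hpow
  refine ⟨(s.image fun S => (Module.annihilator A S).radical).filter fun q => ¬ 𝔟 ≤ q, s.sup n,
    fun q hq => ?_, fun x hx => ?_⟩
  · obtain ⟨hq, h𝔟q⟩ := Finset.mem_filter.1 hq
    obtain ⟨S, hS, rfl⟩ := Finset.mem_image.1 hq
    exact ⟨(isSecondary_of_supIrred (hirr hS)).isPrime_radical_annihilator, h𝔟q⟩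
  · refine eq_top_iff.2 (hs.ge.trans (Finset.sup_le fun S hS => ?_))
    by_cases h : 𝔟 ≤ (Module.annihilator A S).radical
    · refine le_sup_of_le_right fun y hy => (Submodule.mem_torsionBySet_iff _ _).2 fun a => ?_
      exact Submodule.mem_annihilator.1
        (hn S h (Ideal.pow_le_pow_right (Finset.le_sup hS) a.2)) y hy
    · refine le_sup_of_le_left fun y hy => ?_
      have hxS : x ∉ (Module.annihilator A S).radical :=
        hx _ (Finset.mem_filter.2 ⟨Finset.mem_image_of_mem _ hS, h⟩)
      obtain ⟨z, hz⟩ := ((isSecondary_of_supIrred (hirr hS)).2 x).resolve_left hxS ⟨y, hy⟩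
      exact ⟨z, congrArg S.subtype hz⟩

end Secondary

section Localization

variable {R} {M M' : Type*} [AddCommGroup M] [Module R M] [AddCommGroup M'] [Module R M']

theorem exists_forall_smul_smul_eq_zero (S : Submonoid R) {I : Ideal R} (hI : I.FG) {v : M}
    (h : ∀ a ∈ I, ∃ s : S, s • a • v = 0) : ∃ s : S, ∀ a ∈ I, a • s • v = 0 := by
  classical
  obtain ⟨t, rfl⟩ := hI
  choose! s hs using fun a (ha : a ∈ t) => h a (Submodule.subset_span ha)
  refine ⟨∏ a ∈ t, s a, fun a ha => ?_⟩
  suffices Ideal.span (t : Set R) ≤ LinearMap.ker (LinearMap.toSpanSingleton R M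
      ((∏ a ∈ t, s a) • v)) from this ha
  refine Submodule.span_le.2 fun b hb => ?_
  obtain ⟨c, hc⟩ := Finset.dvd_prod_of_mem s hb
  calc b • (∏ a ∈ t, s a) • v = c • s b • b • v := by
        rw [hc, mul_comm, mul_smul, smul_comm b, smul_comm b]
    _ = 0 := by rw [hs b hb, smul_zero]

theorem exists_smul_eq_of_mem_torsionBySet (S : Submonoid R) (f : M →ₗ[R] M')
    [IsLocalizedModule S f] {I : Ideal R} (hI : I.FG) {y : M'}
    (hy : y ∈ Submodule.torsionBySet R M' (I : Set R)) :
    ∃ s : S, ∃ w ∈ Submodule.torsionBySet R M (I : Set R), s • y = f w := by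
  obtain ⟨⟨v, s⟩, hv⟩ := IsLocalizedModule.surj S f y
  have hker (a : R) (ha : a ∈ I) : ∃ t : S, t • a • v = 0 := by
    have hfv : f (a • v) = f 0 := by
      rw [map_smul, map_zero, ← hv, smul_comm, (Submodule.mem_torsionBySet_iff _ _).1 hy ⟨a, ha⟩,
        smul_zero]
    simpa only [smul_zero] using IsLocalizedModule.exists_of_eq (S := S) hfv
  obtain ⟨t, ht⟩ := exists_forall_smul_smul_eq_zero S hI hker
  refine ⟨t * s, t • v, (Submodule.mem_torsionBySet_iff _ _).2 fun a => ht a a.2, ?_⟩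
  rw [mul_smul, hv, f.map_smul_of_tower]

theorem exists_smul_mem_range_lsmul_sup_torsionBySet (S : Submonoid R) (f : M →ₗ[R] M')
    [IsLocalizedModule S f] {I : Ideal R} (hI : I.FG) {x : R} {w : M}
    (hw : f w ∈ LinearMap.range (LinearMap.lsmul R M' x) ⊔
      Submodule.torsionBySet R M' (I : Set R)) :
    ∃ s : S, s • w ∈ LinearMap.range (LinearMap.lsmul R M x) ⊔
      Submodule.torsionBySet R M (I : Set R) := by
  obtain ⟨_, ⟨u', rfl⟩, v', hv', huv⟩ := Submodule.mem_sup.1 hw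
  obtain ⟨s, v, hv, hsv⟩ := exists_smul_eq_of_mem_torsionBySet S f hI hv'
  obtain ⟨⟨u, t⟩, htu⟩ := IsLocalizedModule.surj S f u'
  have hfw : f ((s * t) • w) = f (x • s • u + t • v) := by
    calc f ((s * t) • w) = (s * t) • (x • u' + v') := by
          rw [f.map_smul_of_tower, ← huv, LinearMap.lsmul_apply]
      _ = x • s • t • u' + t • s • v' := by
          rw [smul_add, mul_smul, mul_smul, smul_comm s t v', smul_comm t x, smul_comm s x]
      _ = f (x • s • u + t • v) := by
          rw [htu, hsv, map_add, map_smul, f.map_smul_of_tower, f.map_smul_of_tower]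
  obtain ⟨c, hc⟩ := IsLocalizedModule.exists_of_eq (S := S) hfw
  refine ⟨c * (s * t), Submodule.mem_sup.2 ⟨x • c • s • u, ⟨_, rfl⟩, c • t • v, ?_, ?_⟩⟩
  · exact Submodule.smul_of_tower_mem _ c (Submodule.smul_of_tower_mem _ t hv)
  · rw [smul_comm x c, ← smul_add, ← hc, smul_smul]

end Localization

section LocalizationAtPrime

variable {R} {M : Type u} [AddCommGroup M] [Module R M]

open IsLocalRing in
-- The residue field at `p`, as a quotient ring: this is the ring acting on `torsionBySet`.
local notation "κ(" p ")" => Localization.AtPrime p ⧸ maximalIdeal (Localization.AtPrime p)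

theorem mem_torsionBySet_map_algebraMap {A M' : Type*} [CommRing A] [Algebra R A]
    [AddCommGroup M'] [Module R M'] [Module A M'] [IsScalarTower R A M'] {I : Ideal R} {y : M'} :
    y ∈ Submodule.torsionBySet A M' (I.map (algebraMap R A) : Set A) ↔
      y ∈ Submodule.torsionBySet R M' (I : Set R) := by
  rw [Ideal.map, Ideal.span, ← Submodule.torsionBySet_eq_torsionBySet_span]
  simp

theorem not_linearIndependent_torsionBySet_maximalIdeal [IsNoetherianRing R] (p : Ideal R)
    [p.IsPrime] (hp : (PrimeSpectrum.zeroLocus (p : Set R)).Infinite)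
    (h : IsWeaklyLaskerian R (Submodule.torsionBySet R M (p : Set R)))
    (v : ℕ → Submodule.torsionBySet (Localization.AtPrime p) (LocalizedModule p.primeCompl M)
      (IsLocalRing.maximalIdeal (Localization.AtPrime p) : Set (Localization.AtPrime p))) :
    ¬ LinearIndependent κ(p) v := by
  intro hv
  let f := LocalizedModule.mkLinearMap p.primeCompl M
  have hlift (i : ℕ) : ∃ s : p.primeCompl, ∃ w ∈ Submodule.torsionBySet R M (p : Set R),
      s • (v i : LocalizedModule p.primeCompl M) = f w := by
    refine exists_smul_eq_of_mem_torsionBySet _ f (IsNoetherian.noetherian p)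
      ((mem_torsionBySet_map_algebraMap (A := Localization.AtPrime p)).1 ?_)
    rw [Localization.AtPrime.map_eq_maximalIdeal]
    exact (v i).2
  choose s w hw hsw using hlift
  obtain ⟨c, hc, i, hi⟩ := h.exists_linearCombination_eq_zero hp fun j => ⟨w j, hw j⟩
  have hzero : ∑ j ∈ c.support,
      (Ideal.Quotient.mk _ (algebraMap R (Localization.AtPrime p) (c j * s j)) : κ(p)) • v j =
        0 := by
    refine Subtype.ext ?_
    have hfc := congrArg (f ∘ₗ Submodule.subtype _) hc
    rw [Finsupp.linearCombination_apply, Finsupp.sum, map_sum, map_zero] at hfc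
    rw [Submodule.coe_sum, Submodule.coe_zero, ← hfc]
    refine Finset.sum_congr rfl fun j _ => ?_
    calc algebraMap R (Localization.AtPrime p) (c j * s j) • (v j).1
        = c j • s j • (v j).1 := by rw [algebraMap_smul, mul_smul]; rfl
      _ = f (c j • w j) := by rw [hsw, map_smul]
  have hi₀ : c i ≠ 0 := fun h₀ => hi (h₀ ▸ p.zero_mem)
  have hmem := Ideal.Quotient.eq_zero_iff_mem.1
    (linearIndependent_iff'.1 hv _ _ hzero i (Finsupp.mem_support_iff.2 hi₀))
  rw [IsLocalization.AtPrime.to_map_mem_maximal_iff _ p] at hmem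
  exact (Ideal.IsPrime.mem_or_mem ‹_› hmem).elim hi (s i).2

theorem isArtinian_torsionBySet_maximalIdeal [IsNoetherianRing R] (p : Ideal R) [p.IsPrime]
    (hp : (PrimeSpectrum.zeroLocus (p : Set R)).Infinite)
    (h : IsWeaklyLaskerian R (Submodule.torsionBySet R M (p : Set R))) :
    IsArtinian (Localization.AtPrime p) (Submodule.torsionBySet (Localization.AtPrime p)
      (LocalizedModule p.primeCompl M)
      (IsLocalRing.maximalIdeal (Localization.AtPrime p) : Set (Localization.AtPrime p))) := by
  let T := Submodule.torsionBySet (Localization.AtPrime p) (LocalizedModule p.primeCompl M)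
    (IsLocalRing.maximalIdeal (Localization.AtPrime p) : Set (Localization.AtPrime p))
  let _ : Field κ(p) := Ideal.Quotient.field _
  let b := Module.Basis.ofVectorSpace κ(p) T
  have hfin : Finite (Module.Basis.ofVectorSpaceIndex κ(p) T) := by
    by_contra hinf
    rw [not_finite_iff_infinite] at hinf
    exact not_linearIndependent_torsionBySet_maximalIdeal p hp h _
      (b.linearIndependent.comp _ (Infinite.natEmbedding _).injective)
  have : Module.Finite κ(p) T := Module.Finite.of_basis b
  exact isArtinian_of_surjective_algebraMap (R := κ(p)) Ideal.Quotient.mk_surjective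

theorem exists_smul_pow_smul_eq_zero {p : PrimeSpectrum R}
    (hmin : ∀ q ∈ Module.support R M, q ≤ p → q = p) {x : R} (hx : x ∈ p.asIdeal) (w : M) :
    ∃ n : ℕ, ∃ s : p.asIdeal.primeCompl, s • x ^ n • w = 0 := by
  by_contra! hne
  obtain ⟨q, hq, hwq, hdisj⟩ := Ideal.exists_le_prime_disjoint
    (LinearMap.ker (LinearMap.toSpanSingleton R M w))
    (p.asIdeal.primeCompl ⊔ Submonoid.powers x) (by
      rw [Set.disjoint_left]
      rintro _ hzero hmem
      obtain ⟨s, hs, _, ⟨n, rfl⟩, rfl⟩ := Submonoid.mem_sup.1 hmem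
      exact hne n ⟨s, hs⟩ ((mul_smul s (x ^ n) w).symm.trans hzero))
  have hqp : q ≤ p.asIdeal := fun a ha => of_not_not fun hap =>
    Set.disjoint_left.1 hdisj ha (Submonoid.mem_sup_left (S := p.asIdeal.primeCompl) hap)
  have hqM : (⟨q, hq⟩ : PrimeSpectrum R) ∈ Module.support R M :=
    Module.mem_support_iff'.2 ⟨w, fun r hr hrw => hr (hwq hrw)⟩
  have hxq : x ∈ q := (congrArg PrimeSpectrum.asIdeal (hmin _ hqM hqp)).ge hx
  exact Set.disjoint_left.1 hdisj hxq (Submonoid.mem_sup_right (Submonoid.mem_powers x))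

theorem isArtinian_localizedModule [IsNoetherianRing R] {p : PrimeSpectrum R}
    (hp : (PrimeSpectrum.zeroLocus (p.asIdeal : Set R)).Infinite)
    (hmin : ∀ q ∈ Module.support R M, q ≤ p → q = p)
    (h : IsWeaklyLaskerian R (Submodule.torsionBySet R M (p.asIdeal : Set R))) :
    IsArtinian (Localization.AtPrime p.asIdeal) (LocalizedModule p.asIdeal.primeCompl M) := by
  classical
  let S := p.asIdeal.primeCompl
  let f := LocalizedModule.mkLinearMap S M
  obtain ⟨t, ht⟩ := IsNoetherian.noetherian p.asIdeal
  refine isArtinian_of_isArtinian_torsionBySet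
    (t.image (algebraMap R (Localization.AtPrime p.asIdeal))) (fun x' hx' y => ?_) ?_
  · obtain ⟨x, hxt, rfl⟩ := Finset.mem_image.1 hx'
    obtain ⟨⟨z, r⟩, hz⟩ := IsLocalizedModule.surj S f y
    obtain ⟨n, s, hs⟩ := exists_smul_pow_smul_eq_zero hmin (ht.le (Submodule.subset_span hxt)) z
    refine ⟨n, IsLocalizedModule.smul_injective f (s * r) ?_⟩
    calc (s * r) • algebraMap R (Localization.AtPrime p.asIdeal) x ^ n • y
        = s • x ^ n • r • y := by
          rw [← map_pow, algebraMap_smul, mul_smul, smul_comm r]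
      _ = f (s • x ^ n • z) := by
          rw [hz, ← map_smul]
          exact (f.map_smul_of_tower s _).symm
      _ = (s * r) • 0 := by rw [hs, map_zero, smul_zero]
  · rw [Submodule.torsionBySet_eq_torsionBySet_span, Finset.coe_image]
    have hspan : Ideal.span (algebraMap R (Localization.AtPrime p.asIdeal) '' t) =
        IsLocalRing.maximalIdeal (Localization.AtPrime p.asIdeal) := by
      rw [← Ideal.map_span]
      exact (congrArg _ ht).trans Localization.AtPrime.map_eq_maximalIdeal
    exact hspan.symm ▸ isArtinian_torsionBySet_maximalIdeal p.asIdeal hp h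

theorem exists_primes_forall_notMem_support_quotient {p : PrimeSpectrum R}
    (hM : IsArtinian (Localization.AtPrime p.asIdeal) (LocalizedModule p.asIdeal.primeCompl M))
    {𝔞 : Ideal R} (h𝔞 : 𝔞.FG) :
    ∃ (Q : Finset (Ideal R)) (n : ℕ), (∀ q ∈ Q, q.IsPrime ∧ ¬ 𝔞 ≤ q) ∧
      ∀ x : R, (∀ q ∈ Q, x ∉ q) → p ∉ Module.support R (M ⧸ LinearMap.range
        (LinearMap.lsmul R M x) ⊔ Submodule.torsionBySet R M ((𝔞 ^ n : Ideal R) : Set R)) := by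
  classical
  let A := Localization.AtPrime p.asIdeal
  let S := p.asIdeal.primeCompl
  let f := LocalizedModule.mkLinearMap S M
  obtain ⟨Q, n, hQ, hx⟩ := exists_primes_forall_range_lsmul_sup_torsionBySet_eq_top
    (M := LocalizedModule S M) (h𝔞.map (algebraMap R A))
  refine ⟨Q.image (Ideal.comap (algebraMap R A)), n, fun q' hq' => ?_, fun x hxQ => ?_⟩
  · obtain ⟨q, hq, rfl⟩ := Finset.mem_image.1 hq'
    have := (hQ q hq).1
    exact ⟨Ideal.comap_isPrime _ q, fun hle => (hQ q hq).2 (Ideal.map_le_iff_le_comap.2 hle)⟩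
  rw [Module.notMem_support_iff']
  intro m
  obtain ⟨w, rfl⟩ := Submodule.mkQ_surjective _ m
  obtain ⟨_, ⟨u', rfl⟩, v', hv', huv⟩ := Submodule.mem_sup.1 ((hx (algebraMap R A x) fun q hq hxq =>
    hxQ _ (Finset.mem_image_of_mem _ hq) hxq).ge (Submodule.mem_top (x := f w)))
  rw [← Ideal.map_pow, mem_torsionBySet_map_algebraMap] at hv'
  have hfw : f w ∈ LinearMap.range (LinearMap.lsmul R (LocalizedModule S M) x) ⊔
      Submodule.torsionBySet R (LocalizedModule S M) ((𝔞 ^ n : Ideal R) : Set R) :=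
    Submodule.mem_sup.2 ⟨_, ⟨u', (algebraMap_smul A x u').symm⟩, v', hv', huv⟩
  obtain ⟨s, hs⟩ := exists_smul_mem_range_lsmul_sup_torsionBySet S f h𝔞.pow hfw
  exact ⟨s, s.2, (Submodule.Quotient.mk_eq_zero _).2 hs⟩

theorem exists_mem_forall_notMem_of_not_le {Q : Finset (Ideal R)} {𝔞 : Ideal R}
    (hQ : ∀ q ∈ Q, q.IsPrime ∧ ¬ 𝔞 ≤ q) : ∃ x ∈ 𝔞, ∀ q ∈ Q, x ∉ q := by
  by_contra! hcover
  obtain ⟨q, hq, hle⟩ := (Ideal.subset_union_prime (f := id) ⊤ ⊤ fun q hq _ _ => (hQ q hq).1).1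
    fun x hx => (hcover x hx).elim fun _ hq => Set.mem_biUnion hq.1 hq.2
  exact (hQ q hq).2 hle

theorem exists_mem_forall_notMem_support_quotient {T : Set (PrimeSpectrum R)} (hT : T.Finite)
    (hM : ∀ p ∈ T, IsArtinian (Localization.AtPrime p.asIdeal)
      (LocalizedModule p.asIdeal.primeCompl M)) {𝔞 : Ideal R} (h𝔞 : 𝔞.FG) :
    ∃ x ∈ 𝔞, ∃ n : ℕ, ∀ p ∈ T, p ∉ Module.support R (M ⧸ LinearMap.range
      (LinearMap.lsmul R M x) ⊔ Submodule.torsionBySet R M ((𝔞 ^ n : Ideal R) : Set R)) := by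
  classical
  choose! Q n hQ hsupp using fun p hp => exists_primes_forall_notMem_support_quotient (hM p hp) h𝔞
  obtain ⟨x, hx𝔞, hxQ⟩ := exists_mem_forall_notMem_of_not_le (Q := hT.toFinset.biUnion Q)
    (𝔞 := 𝔞) fun q hq => by
      obtain ⟨p, hp, hqp⟩ := Finset.mem_biUnion.1 hq
      exact hQ p (hT.mem_toFinset.1 hp) q hqp
  refine ⟨x, hx𝔞, hT.toFinset.sup n, fun p hp hpM => hsupp p hp x (fun q hq =>
    hxQ q (Finset.mem_biUnion.2 ⟨p, hT.mem_toFinset.2 hp, hq⟩)) ?_⟩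
  have hle : 𝔞 ^ hT.toFinset.sup n ≤ 𝔞 ^ n p :=
    Ideal.pow_le_pow_right (Finset.le_sup (hT.mem_toFinset.2 hp))
  exact Module.support_subset_of_surjective
    (Submodule.factor (sup_le_sup_left (Submodule.torsionBySet_le_torsionBySet_of_subset hle) _))
    (Submodule.factor_surjective _) hpM

end LocalizationAtPrime

section SupportDimension

variable {R} {M N : Type u} [AddCommGroup M] [Module R M] [AddCommGroup N] [Module R N]

theorem suppDim_mono (h : Module.support R M ⊆ Module.support R N) :
    suppDim R M ≤ suppDim R N :=
  Order.krullDim_le_of_strictMono (Set.inclusion h) fun _ _ hlt => hlt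

theorem eq_of_le_of_suppDim_le_one (hM : suppDim R M ≤ 1) {p q : PrimeSpectrum R}
    (hp : p ∈ Module.support R M) (hpinf : (PrimeSpectrum.zeroLocus (p.asIdeal : Set R)).Infinite)
    (hq : q ∈ Module.support R M) (hqp : q ≤ p) : q = p := by
  rcases Order.krullDim_le_one_iff.1 hM ⟨p, hp⟩ with hmin | hmax
  · exact hqp.antisymm (@hmin ⟨q, hq⟩ hqp)
  · refine absurd ((Set.finite_singleton p).subset fun r (hr : p ≤ r) => ?_) hpinf
    have hrp : r ≤ p := @hmax ⟨r, Module.mem_support_mono hr hp⟩ hr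
    exact hrp.antisymm hr

theorem mem_associatedPrimes_torsionBySet [IsNoetherianRing R] {𝔞 q : Ideal R} (h𝔞q : 𝔞 ≤ q)
    (hq : q ∈ associatedPrimes R M) :
    q ∈ associatedPrimes R (Submodule.torsionBySet R M (𝔞 : Set R)) := by
  obtain ⟨hq, m, rfl⟩ := isAssociatedPrime_iff.1 hq
  have hm : m ∈ Submodule.torsionBySet R M (𝔞 : Set R) :=
    (Submodule.mem_torsionBySet_iff _ _).2 fun a => Submodule.mem_colon_singleton.1 (h𝔞q a.2)
  refine isAssociatedPrime_iff.2 ⟨hq, ⟨m, hm⟩, Ideal.ext fun r => ?_⟩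
  rw [Submodule.mem_colon_singleton, Submodule.mem_colon_singleton, Submodule.mem_bot,
    Submodule.mem_bot, Subtype.ext_iff]
  rfl

end SupportDimension

section Cofiniteness

variable {R} [IsNoetherianRing R] {M : Type u} [AddCommGroup M] [Module R M] {𝔞 : Ideal R}

theorem IsWeaklyLaskerian.torsionBySet_pow
    (h : IsWeaklyLaskerian R (Submodule.torsionBySet R M (𝔞 : Set R))) (n : ℕ) :
    IsWeaklyLaskerian R (Submodule.torsionBySet R M ((𝔞 ^ n : Ideal R) : Set R)) := by
  induction n with
  | zero =>
    have hbot : Submodule.torsionBySet R M ((𝔞 ^ 0 : Ideal R) : Set R) = ⊥ := by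
      rw [pow_zero, Ideal.one_eq_top, Submodule.top_coe, Submodule.torsionBySet_univ]
    rw [hbot]
    exact IsWeaklyLaskerian.of_subsingleton
  | succ n ih =>
    obtain ⟨k, g, hg⟩ := Submodule.fg_iff_exists_fin_generating_family.1
      (IsNoetherian.noetherian 𝔞)
    have hg𝔞 (i : Fin k) : g i ∈ 𝔞 := hg.le (Submodule.subset_span ⟨i, rfl⟩)
    let φ (i : Fin k) : Submodule.torsionBySet R M ((𝔞 ^ (n + 1) : Ideal R) : Set R) →ₗ[R]
        Submodule.torsionBySet R M ((𝔞 ^ n : Ideal R) : Set R) :=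
      (LinearMap.lsmul R M (g i)).restrict fun y hy => (Submodule.mem_torsionBySet_iff _ _).2
        fun a => (smul_smul a.1 (g i) y).trans
          ((Submodule.mem_torsionBySet_iff _ _).1 hy ⟨_, Ideal.mul_mem_mul a.2 (hg𝔞 i)⟩)
    refine h.of_ker_le_range (ih.pi (ι := Fin k)) (f := Submodule.inclusion
      (Submodule.torsionBySet_le_torsionBySet_of_subset (Ideal.pow_le_self n.succ_ne_zero)))
      (g := LinearMap.pi φ) fun y hy => ?_
    have hle : 𝔞 ≤ LinearMap.ker (LinearMap.toSpanSingleton R M y.1) := by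
      refine hg.ge.trans (Submodule.span_le.2 ?_)
      rintro _ ⟨i, rfl⟩
      exact congrArg Subtype.val (congrFun hy i)
    exact ⟨⟨y.1, (Submodule.mem_torsionBySet_iff _ _).2 fun a => hle a.2⟩, rfl⟩

theorem finite_associatedPrimes_of_isWeaklyLaskerian_torsionBySet
    (hs : Module.support R M ⊆ PrimeSpectrum.zeroLocus (𝔞 : Set R))
    (h : IsWeaklyLaskerian R (Submodule.torsionBySet R M (𝔞 : Set R))) :
    (associatedPrimes R M).Finite :=
  h.finite_associatedPrimes.subset fun _ hq =>
    mem_associatedPrimes_torsionBySet (hs (mk_mem_support_of_mem_associatedPrimes hq)) hq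

theorem finite_setOf_mem_support_and_infinite_zeroLocus (hM : suppDim R M ≤ 1)
    (hass : (associatedPrimes R M).Finite) :
    {p | p ∈ Module.support R M ∧
      (PrimeSpectrum.zeroLocus (p.asIdeal : Set R)).Infinite}.Finite := by
  refine Set.Finite.of_finite_image (f := PrimeSpectrum.asIdeal) (hass.subset ?_)
    fun _ _ _ _ => PrimeSpectrum.ext
  rintro _ ⟨p, ⟨hp, hpinf⟩, rfl⟩
  obtain ⟨q, hq, hqp⟩ := exists_mem_associatedPrimes_le_of_mem_support hp
  rwa [← eq_of_le_of_suppDim_le_one hM hp hpinf (mk_mem_support_of_mem_associatedPrimes hq) hqp]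

theorem finite_support_of_finite_zeroLocus (hass : (associatedPrimes R M).Finite)
    (h : ∀ p ∈ Module.support R M, (PrimeSpectrum.zeroLocus (p.asIdeal : Set R)).Finite) :
    (Module.support R M).Finite := by
  refine (hass.biUnion (t := fun q => PrimeSpectrum.zeroLocus (q : Set R)) fun q hq =>
    h ⟨q, hq.1⟩ (mk_mem_support_of_mem_associatedPrimes hq)).subset fun p hp => ?_
  obtain ⟨q, hq, hqp⟩ := exists_mem_associatedPrimes_le_of_mem_support hp
  exact Set.mem_biUnion hq hqp

theorem exists_mem_forall_finite_zeroLocus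
    (hs : Module.support R M ⊆ PrimeSpectrum.zeroLocus (𝔞 : Set R)) (hM : suppDim R M ≤ 1)
    (h : IsWeaklyLaskerian R (Submodule.torsionBySet R M (𝔞 : Set R))) :
    ∃ x ∈ 𝔞, ∃ n : ℕ, ∀ p ∈ Module.support R (M ⧸ LinearMap.range (LinearMap.lsmul R M x) ⊔
        Submodule.torsionBySet R M ((𝔞 ^ n : Ideal R) : Set R)),
      (PrimeSpectrum.zeroLocus (p.asIdeal : Set R)).Finite := by
  obtain ⟨x, hx𝔞, n, hxn⟩ := exists_mem_forall_notMem_support_quotient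
    (finite_setOf_mem_support_and_infinite_zeroLocus hM
      (finite_associatedPrimes_of_isWeaklyLaskerian_torsionBySet hs h))
    (fun p ⟨hp, hpinf⟩ => isArtinian_localizedModule hpinf
      (fun _ => eq_of_le_of_suppDim_le_one hM hp hpinf)
      (h.of_injective (Submodule.inclusion
        (Submodule.torsionBySet_le_torsionBySet_of_subset (hs hp)))
        (Submodule.inclusion_injective _)))
    (IsNoetherian.noetherian 𝔞)
  exact ⟨x, hx𝔞, n, fun p hp => of_not_not fun hpinf => hxn p
    ⟨Module.support_subset_of_surjective _ (Submodule.mkQ_surjective _) hp, hpinf⟩ hp⟩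

theorem isWeaklyLaskerian_ext_of_forall_finite_zeroLocus
    (hs : Module.support R M ⊆ PrimeSpectrum.zeroLocus (𝔞 : Set R))
    (h₀ : IsWeaklyLaskerian R (Abelian.Ext (ModuleCat.of R (R ⧸ 𝔞)) (ModuleCat.of R M) 0))
    {L : Submodule R M} (hL : IsWeaklyLaskerian R L)
    (hfin : ∀ p ∈ Module.support R (M ⧸ L),
      (PrimeSpectrum.zeroLocus (p.asIdeal : Set R)).Finite) (i : ℕ) :
    IsWeaklyLaskerian R (Abelian.Ext (ModuleCat.of R (R ⧸ 𝔞)) (ModuleCat.of R M) i) := by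
  have : Module.Finite R (ModuleCat.of R (R ⧸ 𝔞)) := inferInstanceAs (Module.Finite R (R ⧸ 𝔞))
  have hquot₀ : IsWeaklyLaskerian R
      (Abelian.Ext (ModuleCat.of R (R ⧸ 𝔞)) (ModuleCat.of R (M ⧸ L)) 0) :=
    isWeaklyLaskerian_ext_X₃ (shortExact_subtype_mkQ L) h₀ (isWeaklyLaskerian_ext_of_finite _ hL 1)
  have hsquot := Module.support_subset_of_surjective L.mkQ L.mkQ_surjective
  have hquot : IsWeaklyLaskerian R (M ⧸ L) :=
    .of_finite_support <| finite_support_of_finite_zeroLocus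
      (finite_associatedPrimes_of_isWeaklyLaskerian_torsionBySet (hsquot.trans hs)
        (isWeaklyLaskerian_ext_zero_iff.1 hquot₀)) hfin
  exact isWeaklyLaskerian_ext_X₂ (shortExact_subtype_mkQ L)
    (isWeaklyLaskerian_ext_of_finite _ hL i) (isWeaklyLaskerian_ext_of_finite _ hquot i)

theorem isWeaklyLaskerian_ext_quotient_of_forall_finite_zeroLocus
    (hs : Module.support R M ⊆ PrimeSpectrum.zeroLocus (𝔞 : Set R)) {K L : Submodule R M}
    (h₀ : IsWeaklyLaskerian R (Abelian.Ext (ModuleCat.of R (R ⧸ 𝔞)) (ModuleCat.of R (M ⧸ K)) 0))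
    (hL : IsWeaklyLaskerian R L)
    (hfin : ∀ p ∈ Module.support R (M ⧸ K ⊔ L),
      (PrimeSpectrum.zeroLocus (p.asIdeal : Set R)).Finite) (i : ℕ) :
    IsWeaklyLaskerian R (Abelian.Ext (ModuleCat.of R (R ⧸ 𝔞)) (ModuleCat.of R (M ⧸ K)) i) := by
  refine isWeaklyLaskerian_ext_of_forall_finite_zeroLocus
    ((Module.support_subset_of_surjective K.mkQ K.mkQ_surjective).trans hs) h₀
    (hL.of_surjective (K.mkQ.submoduleMap L) (K.mkQ.submoduleMap_surjective L)) (fun p hp => ?_) i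
  rw [(Submodule.quotientQuotientEquivQuotientSup K L).support_eq] at hp
  exact hfin p hp

theorem isWeaklyLaskerian_ext_of_suppDim_le_one
    (hs : Module.support R M ⊆ PrimeSpectrum.zeroLocus (𝔞 : Set R)) (hM : suppDim R M ≤ 1)
    (h₀ : IsWeaklyLaskerian R (Abelian.Ext (ModuleCat.of R (R ⧸ 𝔞)) (ModuleCat.of R M) 0))
    (h₁ : IsWeaklyLaskerian R (Abelian.Ext (ModuleCat.of R (R ⧸ 𝔞)) (ModuleCat.of R M) 1))
    (i : ℕ) :
    IsWeaklyLaskerian R (Abelian.Ext (ModuleCat.of R (R ⧸ 𝔞)) (ModuleCat.of R M) i) := by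
  induction hJ : Module.annihilator R M using WellFoundedGT.induction generalizing M i with
  | ind J ih =>
  subst hJ
  have hT := isWeaklyLaskerian_ext_zero_iff.1 h₀
  obtain ⟨x, hx𝔞, n, hfin⟩ := exists_mem_forall_finite_zeroLocus hs hM hT
  let μ := LinearMap.lsmul R M x
  by_cases hxM : x ∈ Module.annihilator R M
  · have hμ : LinearMap.range μ = ⊥ := by
      rw [LinearMap.range_eq_bot]
      exact LinearMap.ext (Module.mem_annihilator.1 hxM)
    refine isWeaklyLaskerian_ext_of_forall_finite_zeroLocus hs h₀ (hT.torsionBySet_pow n) ?_ i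
    rwa [hμ, bot_sup_eq] at hfin
  have hsker := Module.support_subset_of_injective _ (LinearMap.ker μ).injective_subtype
  have hlt : Module.annihilator R M < Module.annihilator R (LinearMap.ker μ) :=
    lt_of_le_of_ne ((LinearMap.ker μ).subtype.annihilator_le_of_injective
      (LinearMap.ker μ).injective_subtype) fun heq =>
        hxM (heq ▸ Module.mem_annihilator.2 fun y => Subtype.ext y.2)
  have hker₀ := isWeaklyLaskerian_ext_zero_X₁ (shortExact_subtype_rangeRestrict μ) h₀
  have hrange₀ := isWeaklyLaskerian_ext_zero_X₁ (shortExact_subtype_mkQ (LinearMap.range μ)) h₀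
  have hker := fun i => ih _ hlt (hsker.trans hs) ((suppDim_mono hsker).trans hM) hker₀
    (isWeaklyLaskerian_ext_X₁_succ (shortExact_subtype_rangeRestrict μ) hrange₀ h₁) i rfl
  have hrange₁ := isWeaklyLaskerian_ext_X₃ (shortExact_subtype_rangeRestrict μ) h₁ (hker 2)
  have hquot₀ := isWeaklyLaskerian_ext_X₃ (shortExact_subtype_mkQ (LinearMap.range μ)) h₀ hrange₁
  have hx : ∀ y : R ⧸ 𝔞, x • y = 0 := fun y => y.induction_on fun r =>
    Ideal.Quotient.eq_zero_iff_mem.2 (Ideal.mul_mem_right r 𝔞 hx𝔞)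
  exact isWeaklyLaskerian_ext_of_ker_lsmul_of_quotient hx hker
    (isWeaklyLaskerian_ext_quotient_of_forall_finite_zeroLocus hs hquot₀
      (hT.torsionBySet_pow n) hfin) i

end Cofiniteness

theorem stmt15_general [IsNoetherianRing R] (𝔞 : Ideal R) (M N : Type u)
    [AddCommGroup M] [Module R M] [AddCommGroup N] [Module R N]
    (hM : IsWeaklyCofinite R 𝔞 (ModuleCat.of R M)) (hN : IsWeaklyCofinite R 𝔞 (ModuleCat.of R N))
    (f : M →ₗ[R] N) (hf : suppDim R (LinearMap.ker f) ≤ 1) :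
    IsWeaklyCofinite R 𝔞 (ModuleCat.of R (LinearMap.ker f)) ∧
      IsWeaklyCofinite R 𝔞 (ModuleCat.of R (N ⧸ LinearMap.range f)) := by
  obtain ⟨hMs, hM⟩ := hM
  obtain ⟨hNs, hN⟩ := hN
  simp only [isWeaklyLaskerian_extModule_iff] at hM hN
  have hsker := Module.support_subset_of_injective _ (LinearMap.ker f).injective_subtype
  have hscoker := Module.support_subset_of_surjective _ (LinearMap.range f).mkQ_surjective
  have hker₀ := isWeaklyLaskerian_ext_zero_X₁ (shortExact_subtype_rangeRestrict f) (hM 0)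
  have hrange₀ := isWeaklyLaskerian_ext_zero_X₁ (shortExact_subtype_mkQ (LinearMap.range f)) (hN 0)
  have hker₁ := isWeaklyLaskerian_ext_X₁_succ (shortExact_subtype_rangeRestrict f) hrange₀ (hM 1)
  have hker := isWeaklyLaskerian_ext_of_suppDim_le_one (hsker.trans hMs) hf hker₀ hker₁
  have hrange := fun i =>
    isWeaklyLaskerian_ext_X₃ (shortExact_subtype_rangeRestrict f) (hM i) (hker (i + 1))
  have hcoker := fun i =>
    isWeaklyLaskerian_ext_X₃ (shortExact_subtype_mkQ (LinearMap.range f)) (hN i) (hrange (i + 1))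
  exact ⟨⟨hsker.trans hMs, fun i => isWeaklyLaskerian_extModule_iff.2 (hker i)⟩,
    hscoker.trans hNs, fun i => isWeaklyLaskerian_extModule_iff.2 (hcoker i)⟩

theorem stmt15 [IsNoetherianRing R] (𝔞 : Ideal R) (M N : Type u)
    [AddCommGroup M] [Module R M] [AddCommGroup N] [Module R N]
    (hM : IsWeaklyCofinite R 𝔞 (ModuleCat.of R M)) (hM1 : suppDim R M ≤ 1)
    (hN : IsWeaklyCofinite R 𝔞 (ModuleCat.of R N)) (hN1 : suppDim R N ≤ 1)
    (f : M →ₗ[R] N) :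
    (IsWeaklyCofinite R 𝔞 (ModuleCat.of R (LinearMap.ker f)) ∧
        suppDim R (LinearMap.ker f) ≤ 1) ∧
      IsWeaklyCofinite R 𝔞 (ModuleCat.of R (N ⧸ LinearMap.range f)) ∧
        suppDim R (N ⧸ LinearMap.range f) ≤ 1 := by
  have hker : suppDim R (LinearMap.ker f) ≤ 1 := (suppDim_mono
    (Module.support_subset_of_injective _ (LinearMap.ker f).injective_subtype)).trans hM1
  have hcoker : suppDim R (N ⧸ LinearMap.range f) ≤ 1 := (suppDim_mono
    (Module.support_subset_of_surjective _ (LinearMap.range f).mkQ_surjective)).trans hN1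
  obtain ⟨hkerf, hcokerf⟩ := stmt15_general R 𝔞 M N hM hN f hker
  exact ⟨⟨hkerf, hker⟩, hcokerf, hcoker⟩
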